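/- arXiv:2509.21280 — 2 statements merged into one kernel-verified Lean document; each statement's English description precedes it below -/
import Mathlib

section
/- Let N and n be positive integers, A : ℝ^N → ℝ^n a linear map, K ⊆ ℝ^n a compact set, and f, f_V, g : ℝ^n → ℝ^N continuous maps such that f(p) = f_V(p) + g(p) and A(g(p)) = 0 for all p ∈ K, and such that the map p ↦ A(f_V(p)) is injective on K. Then there exists a continuous map Ψ : ℝ^n → ℝ^N such that Ψ(A(f(p))) = f(p) for all p ∈ K; that is, the linear encoder A followed by the (generally nonlinear) continuous decoder Ψ reconstructs every point of the set f(K) exactly (null representation error). -/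
/-- A linear encoder `A` followed by a (generally nonlinear) continuous decoder `Ψ`
reconstructs every point of the manifold `f(K)` exactly (null representation error),
provided `f = f_V + g` on `K`, `A` annihilates `g` on `K`, and `p ↦ A (f_V p)` is
injective on `K`. -/
theorem linear_encoder_nonlinear_decoder_null_representation_error
    (N n : ℕ) (hN : 0 < N) (hn : 0 < n)
    (A : EuclideanSpace ℝ (Fin N) →ₗ[ℝ] EuclideanSpace ℝ (Fin n))
    (K : Set (EuclideanSpace ℝ (Fin n))) (hK : IsCompact K)
    (f fV g : EuclideanSpace ℝ (Fin n) → EuclideanSpace ℝ (Fin N))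
    (hf : Continuous f) (hfV : Continuous fV) (hg : Continuous g)
    (hdecomp : ∀ p ∈ K, f p = fV p + g p)
    (hann : ∀ p ∈ K, A (g p) = 0)
    (hinj : Set.InjOn (fun p => A (fV p)) K) :
    ∃ Ψ : EuclideanSpace ℝ (Fin n) → EuclideanSpace ℝ (Fin N),
      Continuous Ψ ∧ ∀ p ∈ K, Ψ (A (f p)) = f p := by
  have hA : Continuous A := A.continuous_of_finiteDimensional
  have key : ∀ p ∈ K, A (f p) = A (fV p) := by
    intro p hp
    rw [hdecomp p hp, map_add, hann p hp, add_zero]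
  haveI : CompactSpace K := isCompact_iff_compactSpace.mp hK
  have he : Topology.IsClosedEmbedding (fun p : K => A (f p)) := by
    refine Continuous.isClosedEmbedding (by fun_prop) ?_
    intro p q hpq
    apply Subtype.ext
    apply hinj p.2 q.2
    simpa only [key p p.2, key q q.2] using hpq
  haveI : TietzeExtension (EuclideanSpace ℝ (Fin N)) :=
    TietzeExtension.of_homeo (EuclideanSpace.equiv (Fin N) ℝ).toHomeomorph
  obtain ⟨Ψ, hΨ⟩ := ContinuousMap.exists_extension' he
    (⟨fun p : K => f p, by fun_prop⟩ : C(K, EuclideanSpace ℝ (Fin N)))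
  exact ⟨Ψ, Ψ.continuous, fun p hp => congrFun hΨ ⟨p, hp⟩⟩
end

section
/- Let E be a real inner product space and F : E → E Lipschitz with constant L > 0, satisfying the one-sided Lipschitz condition ⟨F(x) − F(y), x − y⟩ ≤ ν ‖x − y‖² for all x, y, with −L ≤ ν < 0. Let 0 < Δt < 2|ν|/L², and let (u^k), (w^k) be forward Euler sequences: u^{k+1} = u^k + Δt F(u^k) and w^{k+1} = w^k + Δt F(w^k). Then the factor c := 1 + L²Δt² + 2Δtν satisfies 0 ≤ c < 1, for every k one has ‖u^k − w^k‖² ≤ c^k ‖u^0 − w^0‖², and therefore ‖u^k − w^k‖ → 0 as k → ∞ (the timestep bound Δt < 2|ν|/L² guarantees that the dissipativity of the ODE is inherited by the forward Euler discretization). -/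
open scoped RealInnerProductSpace

/-- The timestep bound `Δt < 2|ν|/L²` guarantees that the dissipativity of the ODE
is inherited by the forward Euler discretization: the amplification factor
`c = 1 + L²Δt² + 2Δtν` satisfies `0 ≤ c < 1`, the squared distance between two
forward Euler sequences satisfies `‖u^k − w^k‖² ≤ c^k ‖u^0 − w^0‖²`, and the
distance tends to `0`. -/
theorem forward_euler_dissipativity
    (E : Type*) [NormedAddCommGroup E] [InnerProductSpace ℝ E]
    (F : E → E) (L ν Δt : ℝ)
    (hL : 0 < L) (hνL : -L ≤ ν) (hν : ν < 0)
    (hLip : ∀ x y, ‖F x - F y‖ ≤ L * ‖x - y‖)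
    (hOneSided : ∀ x y, ⟪F x - F y, x - y⟫ ≤ ν * ‖x - y‖ ^ 2)
    (hΔt0 : 0 < Δt) (hΔt : Δt < 2 * |ν| / L ^ 2)
    (u w : ℕ → E)
    (hu : ∀ k, u (k + 1) = u k + Δt • F (u k))
    (hw : ∀ k, w (k + 1) = w k + Δt • F (w k)) :
    0 ≤ 1 + L ^ 2 * Δt ^ 2 + 2 * Δt * ν ∧
    1 + L ^ 2 * Δt ^ 2 + 2 * Δt * ν < 1 ∧
    (∀ k : ℕ, ‖u k - w k‖ ^ 2 ≤
      (1 + L ^ 2 * Δt ^ 2 + 2 * Δt * ν) ^ k * ‖u 0 - w 0‖ ^ 2) ∧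
    Filter.Tendsto (fun k : ℕ => ‖u k - w k‖) Filter.atTop (nhds 0) := by
  have h0 : 0 ≤ 1 + L ^ 2 * Δt ^ 2 + 2 * Δt * ν := by
    nlinarith [sq_nonneg (1 - L * Δt), mul_nonneg hΔt0.le (by linarith : 0 ≤ ν + L)]
  have h1 : 1 + L ^ 2 * Δt ^ 2 + 2 * Δt * ν < 1 := by
    rw [abs_of_neg hν, lt_div_iff₀ (by positivity)] at hΔt
    nlinarith [mul_lt_mul_of_pos_left hΔt hΔt0]
  have hk : ∀ k : ℕ, ‖u k - w k‖ ^ 2 ≤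
      (1 + L ^ 2 * Δt ^ 2 + 2 * Δt * ν) ^ k * ‖u 0 - w 0‖ ^ 2 := by
    intro k
    induction k with
    | zero => simp
    | succ k ih =>
      have e : u (k + 1) - w (k + 1) = (u k - w k) + Δt • (F (u k) - F (w k)) := by
        rw [hu, hw, smul_sub]; abel
      have a1 := hOneSided (u k) (w k)
      have a2 : ‖F (u k) - F (w k)‖ ^ 2 ≤ L ^ 2 * ‖u k - w k‖ ^ 2 := by
        rw [← mul_pow]
        exact pow_le_pow_left₀ (norm_nonneg _) (hLip _ _) 2
      have step : ‖u (k + 1) - w (k + 1)‖ ^ 2 ≤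
          (1 + L ^ 2 * Δt ^ 2 + 2 * Δt * ν) * ‖u k - w k‖ ^ 2 := by
        rw [e, norm_add_sq_real, inner_smul_right, real_inner_comm, norm_smul, mul_pow,
          Real.norm_eq_abs, sq_abs]
        have b1 := mul_le_mul_of_nonneg_left a1 hΔt0.le
        have b2 := mul_le_mul_of_nonneg_left a2 (sq_nonneg Δt)
        linarith
      calc _ ≤ _ := step
        _ ≤ _ := mul_le_mul_of_nonneg_left ih h0
        _ = _ := by ring
  refine ⟨h0, h1, hk, ?_⟩
  have t : Filter.Tendsto (fun k : ℕ => ‖u k - w k‖ ^ 2) Filter.atTop (nhds 0) := by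
    refine squeeze_zero (fun k => sq_nonneg _) hk ?_
    simpa using (tendsto_pow_atTop_nhds_zero_of_lt_one h0 h1).mul_const (‖u 0 - w 0‖ ^ 2)
  have t2 := t.sqrt
  simpa [Real.sqrt_sq (norm_nonneg _)] using t2
end
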